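/- The trajectory of the digit-reversal map f starting from 1099989000 diverges to infinity: for every M : ℕ there exists k such that f^[k](1099989000) > M. -/

import Mathlib

/-!
Write `A a b` for the number with decimal expansion `1 0 9…9 8 9 0…0`, with `a` nines in the first
block and `b` zeros in the last. The starting value is `A 3 3`. Applying `f` to any
`A a b` met on the trajectory subtracts the reversal, applying it again adds the reversal, and the
trajectory passes through

`A m m → A m (m+1) → A (m+2) m → A (m+2) (m+1) → A (m+2) (m+2)`

with two applications of `f` per arrow (`double_step₁`, …, `double_step₄`, where `m = p + 2`).
The eight evaluations of `f` are reduced, by writing out digit lists, to polynomial identities in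
`10 ^ p`. Hence the trajectory contains `A m m ≥ m` for all odd `m ≥ 3`, so it is unbounded.
-/


def rev (n : ℕ) : ℕ := Nat.ofDigits 10 ((Nat.digits 10 n).reverse)

def f (n : ℕ) : ℕ := if rev n < n then n - rev n else n + rev n

theorem rev_ofDigits (l : List ℕ) (hd : ∀ d ∈ l, d < 10) (hl : ∀ h : l ≠ [], l.getLast h ≠ 0) :
    rev (Nat.ofDigits 10 l) = Nat.ofDigits 10 l.reverse := by
  unfold rev
  rw [Nat.digits_ofDigits 10 (by norm_num) l hd hl]

theorem f_sub_step (l l' : List ℕ) (hd : ∀ d ∈ l, d < 10) (hl : ∀ h : l ≠ [], l.getLast h ≠ 0)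
    (hpos : 0 < Nat.ofDigits 10 l')
    (h : Nat.ofDigits 10 l = Nat.ofDigits 10 l.reverse + Nat.ofDigits 10 l') :
    f (Nat.ofDigits 10 l) = Nat.ofDigits 10 l' := by
  unfold f
  rw [rev_ofDigits l hd hl, if_pos (by omega)]
  omega

theorem f_add_step (l l' : List ℕ) (hd : ∀ d ∈ l, d < 10) (hl : ∀ h : l ≠ [], l.getLast h ≠ 0)
    (hle : Nat.ofDigits 10 l ≤ Nat.ofDigits 10 l.reverse)
    (h : Nat.ofDigits 10 l + Nat.ofDigits 10 l.reverse = Nat.ofDigits 10 l') :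
    f (Nat.ofDigits 10 l) = Nat.ofDigits 10 l' := by
  unfold f
  rw [rev_ofDigits l hd hl, if_neg (by omega), h]

theorem ofDigits_replicate_nine (p : ℕ) :
    Nat.ofDigits 10 (List.replicate p 9) + 1 = 10 ^ p := by
  induction p with
  | zero => simp
  | succ p ih => rw [List.replicate_succ, Nat.ofDigits_cons, pow_succ]; omega

theorem ofDigits_replicate_zero (p : ℕ) : Nat.ofDigits 10 (List.replicate p 0) = 0 := by
  induction p with
  | zero => simp
  | succ p ih => simp [List.replicate_succ, Nat.ofDigits_cons, ih]

/-- Digits, least significant first, of the number `1 0 9…9 8 9 0…0` with `a` nines in the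
first block and `b` trailing zeros. -/
def digitsA (a b : ℕ) : List ℕ :=
  List.replicate b 0 ++ [9, 8] ++ List.replicate a 9 ++ [0, 1]

/-- The number `1 0 9…9 8 9 0…0` with `a` nines in the first block and `b` trailing zeros. -/
def A (a b : ℕ) : ℕ := Nat.ofDigits 10 (digitsA a b)

/-- Digits, least significant first, of the number `1 0 9…9 w 0…0 9 9` with `a` nines in the first
block and `b` zeros, where `w` is a middle word, itself given least significant digit first. -/
def digitsB (a b : ℕ) (w : List ℕ) : List ℕ :=
  [9, 9] ++ List.replicate b 0 ++ w ++ List.replicate a 9 ++ [0, 1]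

theorem digitsA_lt (a b : ℕ) : ∀ d ∈ digitsA a b, d < 10 := by
  intro d hd
  simp only [digitsA, List.mem_append, List.mem_replicate, List.mem_cons, List.not_mem_nil,
    or_false] at hd
  omega

theorem digitsA_last (a b : ℕ) : ∀ h : digitsA a b ≠ [], (digitsA a b).getLast h ≠ 0 := by
  simp [digitsA]

theorem digitsB_lt (a b : ℕ) (w : List ℕ) (hw : ∀ d ∈ w, d < 10) :
    ∀ d ∈ digitsB a b w, d < 10 := by
  intro d hd
  have := hw d
  simp only [digitsB, List.mem_append, List.mem_replicate, List.mem_cons, List.not_mem_nil,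
    or_false] at hd
  by_cases hdw : d ∈ w
  · exact this hdw
  · simp only [hdw, or_false] at hd
    omega

theorem digitsB_last (a b : ℕ) (w : List ℕ) :
    ∀ h : digitsB a b w ≠ [], (digitsB a b w).getLast h ≠ 0 := by
  simp [digitsB]

theorem value_digitsA (a b : ℕ) :
    Nat.ofDigits 10 (digitsA a b) + 11 * 10 ^ b = 11 * 10 ^ (a + b + 2) := by
  have h := ofDigits_replicate_nine a
  simp only [digitsA, Nat.ofDigits_append, ofDigits_replicate_zero, Nat.ofDigits_cons,
    Nat.ofDigits_nil, List.length_append, List.length_replicate, List.length_cons,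
    List.length_nil, pow_add, ← h]
  push_cast
  ring

theorem value_digitsA_reverse (a b : ℕ) :
    Nat.ofDigits 10 (digitsA a b).reverse + 99 = 99 * 10 ^ (a + 2) := by
  have h := ofDigits_replicate_nine a
  simp only [digitsA, List.reverse_append, List.reverse_replicate, List.reverse_cons,
    List.reverse_nil, Nat.ofDigits_append, ofDigits_replicate_zero, Nat.ofDigits_cons,
    Nat.ofDigits_nil, List.length_append, List.length_replicate, List.length_cons,
    List.length_nil, List.nil_append, pow_add, ← h]
  push_cast
  ring

theorem value_digitsB (a b : ℕ) (w : List ℕ) :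
    Nat.ofDigits 10 (digitsB a b w) + 10 ^ (2 + b + w.length) =
      99 + Nat.ofDigits 10 w * 10 ^ (2 + b) + 11 * 10 ^ (2 + b + w.length + a) := by
  have h := ofDigits_replicate_nine a
  simp only [digitsB, Nat.ofDigits_append, ofDigits_replicate_zero, Nat.ofDigits_cons,
    Nat.ofDigits_nil, List.length_append, List.length_replicate, List.length_cons,
    List.length_nil, pow_add, ← h]
  push_cast
  ring

theorem value_digitsB_reverse (a b : ℕ) (w : List ℕ) :
    Nat.ofDigits 10 (digitsB a b w).reverse + 99 =
      10 ^ (2 + a) + Nat.ofDigits 10 w.reverse * 10 ^ (2 + a)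
        + 99 * 10 ^ (2 + a + w.length + b) := by
  have h := ofDigits_replicate_nine a
  simp only [digitsB, List.reverse_append, List.reverse_replicate, List.reverse_cons,
    List.reverse_nil, Nat.ofDigits_append, ofDigits_replicate_zero, Nat.ofDigits_cons,
    Nat.ofDigits_nil, List.length_append, List.length_replicate, List.length_cons,
    List.length_nil, List.length_reverse, List.nil_append, pow_add, ← h]
  push_cast
  ring

/-- Two applications of `f`, the first subtracting and the second adding the reversal, with the
intermediate value `digitsB c d w`. -/
theorem double_step {a b c d a' b' : ℕ} (w : List ℕ) (hw : ∀ d ∈ w, d < 10)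
    (h₁ : Nat.ofDigits 10 (digitsA a b) =
      Nat.ofDigits 10 (digitsA a b).reverse + Nat.ofDigits 10 (digitsB c d w))
    (hle : Nat.ofDigits 10 (digitsB c d w) ≤ Nat.ofDigits 10 (digitsB c d w).reverse)
    (h₂ : Nat.ofDigits 10 (digitsB c d w) + Nat.ofDigits 10 (digitsB c d w).reverse =
      Nat.ofDigits 10 (digitsA a' b')) :
    f^[2] (A a b) = A a' b' := by
  have hpos : 0 < Nat.ofDigits 10 (digitsB c d w) := by
    simp only [digitsB, List.cons_append, Nat.ofDigits_cons]
    omega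
  change f (f _) = _
  unfold A
  rw [f_sub_step _ _ (digitsA_lt a b) (digitsA_last a b) hpos h₁,
    f_add_step _ _ (digitsB_lt c d w hw) (digitsB_last c d w) hle h₂]

theorem double_step₁ (p : ℕ) : f^[2] (A (p + 2) (p + 2)) = A (p + 2) (p + 3) := by
  have hA := value_digitsA (p + 2) (p + 2)
  have hA' := value_digitsA_reverse (p + 2) (p + 2)
  have hB := value_digitsB p p [9, 8, 0, 0]
  have hB' := value_digitsB_reverse p p [9, 8, 0, 0]
  have hC := value_digitsA (p + 2) (p + 3)
  have hx : 1 ≤ 10 ^ p := Nat.one_le_pow _ _ (by norm_num)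
  have hxx : 10 ^ p ≤ 10 ^ p * 10 ^ p := Nat.le_mul_of_pos_left _ hx
  simp [pow_add, Nat.ofDigits_cons, -List.reverse_append] at hA hA' hB hB' hC
  apply double_step [9, 8, 0, 0] (by simp) <;> linarith

theorem double_step₂ (p : ℕ) : f^[2] (A (p + 2) (p + 3)) = A (p + 4) (p + 2) := by
  have hA := value_digitsA (p + 2) (p + 3)
  have hA' := value_digitsA_reverse (p + 2) (p + 3)
  have hB := value_digitsB p (p + 1) [9, 9, 9, 8]
  have hB' := value_digitsB_reverse p (p + 1) [9, 9, 9, 8]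
  have hC := value_digitsA (p + 4) (p + 2)
  have hx : 1 ≤ 10 ^ p := Nat.one_le_pow _ _ (by norm_num)
  have hxx : 10 ^ p ≤ 10 ^ p * 10 ^ p := Nat.le_mul_of_pos_left _ hx
  simp [pow_add, Nat.ofDigits_cons, -List.reverse_append] at hA hA' hB hB' hC
  apply double_step [9, 9, 9, 8] (by simp) <;> linarith

theorem double_step₃ (p : ℕ) : f^[2] (A (p + 4) (p + 2)) = A (p + 4) (p + 3) := by
  have hA := value_digitsA (p + 4) (p + 2)
  have hA' := value_digitsA_reverse (p + 4) (p + 2)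
  have hB := value_digitsB p p [9, 8, 9, 9, 0, 0]
  have hB' := value_digitsB_reverse p p [9, 8, 9, 9, 0, 0]
  have hC := value_digitsA (p + 4) (p + 3)
  have hx : 1 ≤ 10 ^ p := Nat.one_le_pow _ _ (by norm_num)
  have hxx : 10 ^ p ≤ 10 ^ p * 10 ^ p := Nat.le_mul_of_pos_left _ hx
  simp [pow_add, Nat.ofDigits_cons, -List.reverse_append] at hA hA' hB hB' hC
  apply double_step [9, 8, 9, 9, 0, 0] (by simp) <;> linarith

theorem double_step₄ (p : ℕ) : f^[2] (A (p + 4) (p + 3)) = A (p + 4) (p + 4) := by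
  have hA := value_digitsA (p + 4) (p + 3)
  have hA' := value_digitsA_reverse (p + 4) (p + 3)
  have hB := value_digitsB (p + 1) (p + 1) [9, 8, 9, 0, 0]
  have hB' := value_digitsB_reverse (p + 1) (p + 1) [9, 8, 9, 0, 0]
  have hC := value_digitsA (p + 4) (p + 4)
  have hx : 1 ≤ 10 ^ p := Nat.one_le_pow _ _ (by norm_num)
  have hxx : 10 ^ p ≤ 10 ^ p * 10 ^ p := Nat.le_mul_of_pos_left _ hx
  simp [pow_add, Nat.ofDigits_cons, -List.reverse_append] at hA hA' hB hB' hC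
  apply double_step [9, 8, 9, 0, 0] (by simp) <;> linarith

theorem trajectory_hits (j : ℕ) : ∃ k, f^[k] 1099989000 = A (2 * j + 3) (2 * j + 3) := by
  induction j with
  | zero => exact ⟨0, by simp [A, digitsA, List.replicate_succ, Nat.ofDigits_cons]⟩
  | succ j ih =>
    obtain ⟨k, hk⟩ := ih
    refine ⟨2 + (2 + (2 + (2 + k))), ?_⟩
    rw [Function.iterate_add_apply, Function.iterate_add_apply, Function.iterate_add_apply,
      Function.iterate_add_apply, hk, double_step₁ (2 * j + 1), double_step₂ (2 * j + 1),
      double_step₃ (2 * j + 1), double_step₄ (2 * j + 1)]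
    congr 1

theorem lt_A (a b : ℕ) : b < A a b := by
  have h := value_digitsA a b
  have hb : b < 10 ^ b := Nat.lt_pow_self (by norm_num)
  have ha : 10 ^ b ≤ 10 ^ (a + b) := Nat.pow_le_pow_right (by norm_num) (by omega)
  rw [pow_add _ (a + b) 2] at h
  unfold A
  omega

theorem diverging_trajectory_1099989000 :
    ∀ M : ℕ, ∃ k : ℕ, f^[k] 1099989000 > M := by
  intro M
  obtain ⟨k, hk⟩ := trajectory_hits M
  refine ⟨k, ?_⟩
  have := lt_A (2 * M + 3) (2 * M + 3)
  omega
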